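/- Let X ∈ S^n_+ and Y ∈ N_{S^n_+}(X), and let A = X + Y have eigenvalue decomposition A = PΛP^T with index sets α, β, γ of positive, zero, negative eigenvalues. Then X = P_α Λ_αα P_α^T and Y = P_γ Λ_γγ P_γ^T; in particular λ_i(A) = λ_i(X) for i ∈ α and λ_i(A) is a negative eigenvalue of Y for i ∈ γ. -/

import Mathlib

open Matrix BigOperators Finset

theorem sum_part_eq {n : ℕ} (P : Matrix (Fin n) (Fin n) ℝ) (lam : Fin n → ℝ)
    (p : Fin n → Prop) [DecidablePred p] :
    (∑ i ∈ Finset.univ.filter p,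
          lam i • Matrix.vecMulVec (fun k => P k i) (fun k => P k i))
      = P * Matrix.diagonal (fun i => if p i then lam i else 0) * Pᵀ := by
  ext a b
  rw [Matrix.sum_apply, Matrix.mul_apply, Finset.sum_filter]
  refine Finset.sum_congr rfl fun i _ => ?_
  rw [Matrix.mul_diagonal]
  by_cases h : p i
  · simp [h, Matrix.vecMulVec_apply]; ring
  · simp [h]

/-- if `X` is PSD and `Y` lies in the normal cone of the PSD cone at `X`, and
`A = X + Y = P Λ Pᵀ` is an eigenvalue decomposition with eigenvalues in nonincreasing order,
then `X` is the positive-eigenvalue part and `Y` the negative-eigenvalue part of `A`. -/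
theorem stmt4 {n : ℕ} (X Y A P : Matrix (Fin n) (Fin n) ℝ) (lam : Fin n → ℝ)
    (hX : X.PosSemidef) (hYsymm : Y.IsSymm)
    (hNC : ∀ X' : Matrix (Fin n) (Fin n) ℝ, X'.PosSemidef → ((X' - X) * Y).trace ≤ 0)
    (hA : A = X + Y) (hP : Pᵀ * P = 1) (hlam : Antitone lam)
    (hdecomp : A = P * Matrix.diagonal lam * Pᵀ) :
    X = (∑ i ∈ Finset.univ.filter (fun i => 0 < lam i),
          lam i • Matrix.vecMulVec (fun k => P k i) (fun k => P k i))
    ∧ Y = (∑ i ∈ Finset.univ.filter (fun i => lam i < 0),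
          lam i • Matrix.vecMulVec (fun k => P k i) (fun k => P k i)) := by
  rw [sum_part_eq, sum_part_eq]
  set dp : Fin n → ℝ := fun i => if 0 < lam i then lam i else 0 with hdp
  set dn : Fin n → ℝ := fun i => if lam i < 0 then lam i else 0 with hdn
  set B := P * Matrix.diagonal dp * Pᵀ with hB
  set N := P * Matrix.diagonal dn * Pᵀ with hN
  have hdp0 : ∀ i, 0 ≤ dp i := by
    intro i; simp only [hdp]; split_ifs with h
    · exact h.le
    · exact le_rfl
  have hdn0 : ∀ i, dn i ≤ 0 := by
    intro i; simp only [hdn]; split_ifs with h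
    · exact h.le
    · exact le_rfl
  have hsum : ∀ i, dp i + dn i = lam i := by
    intro i; simp only [hdp, hdn]; split_ifs <;> linarith
  have hprod : ∀ i, dp i * dn i = 0 := by
    intro i; simp only [hdp, hdn]; split_ifs <;> first | (exfalso; linarith) | simp
  have hBN : B + N = X + Y := by
    rw [← hA, hdecomp, hB, hN, ← Matrix.add_mul, ← Matrix.mul_add, Matrix.diagonal_add]
    simp only [hsum]
  have hBpsd : B.PosSemidef := by
    have := (Matrix.PosSemidef.diagonal (d := dp) hdp0).mul_mul_conjTranspose_same P
    simpa using this
  have hBNmul : B * N = 0 := by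
    have : B * N = P * Matrix.diagonal dp * (Pᵀ * P) * Matrix.diagonal dn * Pᵀ := by
      simp only [hB, hN, Matrix.mul_assoc]
    rw [this, hP, Matrix.mul_one, Matrix.mul_assoc P, Matrix.diagonal_mul_diagonal]
    simp [hprod]
  have hXN : (X * N).trace ≤ 0 := by
    have h1 : (X * N).trace = (Pᵀ * X * P * Matrix.diagonal dn).trace := by
      rw [hN, ← Matrix.mul_assoc, Matrix.trace_mul_comm]
      simp only [Matrix.mul_assoc]
    have h2 : (Pᵀ * X * P).PosSemidef := by
      simpa using hX.conjTranspose_mul_mul_same P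
    rw [h1, Matrix.trace]
    refine Finset.sum_nonpos fun i _ => ?_
    rw [Matrix.diag_apply, Matrix.mul_diagonal]
    exact mul_nonpos_of_nonneg_of_nonpos h2.diag_nonneg (hdn0 i)
  have hXY : (X * Y).trace = 0 := by
    have h0 := hNC 0 Matrix.PosSemidef.zero
    have h2 := hNC (X + X) (hX.add hX)
    simp at h0 h2
    linarith
  have hBY : (B * Y).trace ≤ 0 := by
    have h := hNC B hBpsd
    rw [Matrix.sub_mul, Matrix.trace_sub, hXY] at h
    linarith
  have hD2 : X - B = N - Y := by
    rw [sub_eq_sub_iff_add_eq_add, ← hBN, add_comm]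
  have hDsymm : (X - B)ᴴ = X - B := (hX.isHermitian.sub hBpsd.isHermitian)
  have htr : ((X - B)ᴴ * (X - B)).trace ≤ 0 := by
    rw [hDsymm]
    nth_rewrite 2 [hD2]
    rw [Matrix.sub_mul, Matrix.mul_sub, Matrix.mul_sub, hBNmul]
    simp only [Matrix.trace_sub, Matrix.trace_zero]
    linarith
  have hge : 0 ≤ ((X - B)ᴴ * (X - B)).trace :=
    (Matrix.posSemidef_conjTranspose_mul_self (X - B)).trace_nonneg
  have hD0 : X - B = 0 :=
    Matrix.trace_conjTranspose_mul_self_eq_zero_iff.mp (le_antisymm htr hge)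
  refine ⟨sub_eq_zero.mp hD0, ?_⟩
  rw [hD2] at hD0
  exact (sub_eq_zero.mp hD0).symm
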